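/- arXiv:2109.00447 — 2 statements merged into one kernel-verified Lean document; each statement's English description precedes it below -/
import Mathlib

section
/- Let ⟨·,·⟩ be a nondegenerate symmetric bilinear form on T*𝔥₃ whose restriction to 𝔤′ = span(e₄,e₅,e₆) has signature (2,1), and suppose the restriction of ⟨·,·⟩ to the orthogonal complement of 𝔤′ is positive definite or negative definite. Then there exists a Lie algebra automorphism F of T*𝔥₃ and nonzero reals δ₁, δ₂, δ₃ such that the matrix of (x,y) ↦ ⟨Fx, Fy⟩ in the basis (e₁,…,e₆) is diag(ε δ₁², ε δ₂², ε δ₃², 1, 1, −1) for some ε ∈ {+1, −1}. -/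
open Matrix

noncomputable section

/-- The Lie bracket of `T*𝔥₃` in the basis `(e₁,…,e₆)`:
`[e₁,e₂]=e₆`, `[e₁,e₃]=−e₅`, `[e₂,e₃]=e₄`. -/
def bra (x y : Fin 6 → ℝ) : Fin 6 → ℝ :=
  ![0, 0, 0, x 1 * y 2 - x 2 * y 1, x 2 * y 0 - x 0 * y 2, x 0 * y 1 - x 1 * y 0]

/-- The derived algebra `𝔤′ = span(e₄,e₅,e₆)` of `T*𝔥₃`. -/
def gder : Submodule ℝ (Fin 6 → ℝ) :=
  Submodule.span ℝ {Pi.single 3 1, Pi.single 4 1, Pi.single 5 1}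

/-- `F` is a Lie algebra automorphism of `T*𝔥₃` (as a matrix in the basis `e`). -/
def IsAuto (F : Matrix (Fin 6) (Fin 6) ℝ) : Prop :=
  Function.Bijective F.mulVec ∧
    ∀ x y : Fin 6 → ℝ, F.mulVec (bra x y) = bra (F.mulVec x) (F.mulVec y)

/-- `E₂₁ = diag(1,1,−1)`. -/
def E21 : Matrix (Fin 3) (Fin 3) ℝ := Matrix.diagonal ![1, 1, -1]

/-!
An invertible `A` acting on `ℝ³ = ⟨e₁, e₂, e₃⟩` extends to automorphisms of `T*𝔥₃`, which act on
`𝔤′` by the cofactor matrix `(adj A)ᵀ` because the bracket is the cross product; the off-diagonal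
block is arbitrary. Choosing that block so that the image of `ℝ³` is `𝔤′^⊥` leaves a definite form
`±N` there and the given form `D` on `𝔤′`. The cofactor matrices of invertible `A` are the `C` with
`det C > 0`, and if `C = (adj A)ᵀ`, then `Aᵀ N A` is, up to the positive factor `(det A)²`, the
inverse of `Cᵀ N⁻¹ C`. So it suffices to reduce `N⁻¹` to some diagonal form and `D` to the
prescribed one by the same `C`; its determinant can be made positive by passing to `-C`, the
dimension being odd. Such a `C` is obtained by diagonalizing `D` relative to `N⁻¹`, rescaling, and
matching the signs of the diagonal entries by a permutation, which Sylvester's law of inertia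
provides.
-/

section SimultaneousDiagonalization

variable {n : Type*} [Fintype n] [DecidableEq n]

lemma inv_mul_congr_congr {R : Type*} [CommRing R] {P : Matrix n n R} (hP : IsUnit P.det)
    (M Q : Matrix n n R) : (P⁻¹ * Q)ᵀ * (Pᵀ * M * P) * (P⁻¹ * Q) = Qᵀ * M * Q := by
  calc (P⁻¹ * Q)ᵀ * (Pᵀ * M * P) * (P⁻¹ * Q) = (P * (P⁻¹ * Q))ᵀ * M * (P * (P⁻¹ * Q)) := by
        simp only [transpose_mul, Matrix.mul_assoc]
    _ = Qᵀ * M * Q := by rw [mul_nonsing_inv_cancel_left _ _ hP]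

lemma exists_orthogonal_congr_eq_diagonal {M : Matrix n n ℝ} (hM : M.IsSymm) :
    ∃ (U : Matrix n n ℝ) (d : n → ℝ), Uᵀ * U = 1 ∧ Uᵀ * M * U = diagonal d := by
  have hH : M.IsHermitian := (conjTranspose_eq_transpose_of_trivial M).trans hM
  refine ⟨hH.eigenvectorUnitary, hH.eigenvalues, ?_, ?_⟩
  · exact mem_unitaryGroup_iff'.mp hH.eigenvectorUnitary.2
  · have hdiag := hH.conjStarAlgAut_star_eigenvectorUnitary
    rwa [Unitary.conjStarAlgAut_star_apply] at hdiag

open scoped MatrixOrder in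
lemma exists_congr_eq_one_and_congr_eq_diagonal {H M : Matrix n n ℝ} (hH : H.PosDef)
    (hM : M.IsSymm) :
    ∃ (P : Matrix n n ℝ) (d : n → ℝ), Pᵀ * H * P = 1 ∧ Pᵀ * M * P = diagonal d := by
  obtain ⟨L, rfl⟩ := CStarAlgebra.nonneg_iff_eq_star_mul_self.mp hH.posSemidef.nonneg
  have hL : IsUnit L.det := (isUnit_iff_isUnit_det L).mp (isUnit_of_mul_isUnit_right hH.isUnit)
  have hT : (L⁻¹ᵀ * M * L⁻¹).IsSymm := by
    simp only [IsSymm, transpose_mul, transpose_transpose, hM.eq, Matrix.mul_assoc]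
  obtain ⟨U, d, hU, hd⟩ := exists_orthogonal_congr_eq_diagonal hT
  refine ⟨L⁻¹ * U, d, ?_, ?_⟩
  · rw [← Matrix.mul_one (star L), star_eq_conjTranspose, conjTranspose_eq_transpose_of_trivial,
      inv_mul_congr_congr hL, Matrix.mul_one, hU]
  · rw [← hd]
    simp only [transpose_mul, Matrix.mul_assoc]

lemma weightedSumSquares_eq_dotProduct_diagonal_mulVec (w x : n → ℝ) :
    QuadraticMap.weightedSumSquares ℝ w x = x ⬝ᵥ diagonal w *ᵥ x := by
  simp only [QuadraticMap.weightedSumSquares_apply, dotProduct, mulVec_diagonal, smul_eq_mul]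
  exact Finset.sum_congr rfl fun i _ => by ring

lemma weightedSumSquares_equivalent_of_congr {d η : n → ℝ} {W : Matrix n n ℝ}
    (hW : IsUnit W.det) (h : Wᵀ * diagonal d * W = diagonal η) :
    (QuadraticMap.weightedSumSquares ℝ η).Equivalent (QuadraticMap.weightedSumSquares ℝ d) := by
  refine ⟨⟨W.toLinearEquiv' (W.invertibleOfIsUnitDet hW), fun x => ?_⟩⟩
  change QuadraticMap.weightedSumSquares ℝ d (W *ᵥ x) = QuadraticMap.weightedSumSquares ℝ η x
  rw [weightedSumSquares_eq_dotProduct_diagonal_mulVec,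
    weightedSumSquares_eq_dotProduct_diagonal_mulVec, ← h, ← mulVec_mulVec, ← mulVec_mulVec,
    dotProduct_mulVec x, vecMul_transpose]

lemma isUnit_det_of_congr_eq_diagonal {K : Type*} [Field K] {M Q : Matrix n n K} {η : n → K}
    (hη : ∀ i, η i ≠ 0) (h : Qᵀ * M * Q = diagonal η) : IsUnit Q.det ∧ IsUnit M.det := by
  have hdet : Q.det * M.det * Q.det ≠ 0 := by
    rw [← det_transpose Q, ← det_mul, det_transpose, ← det_mul, h, det_diagonal]
    exact Finset.prod_ne_zero_iff.mpr fun i _ => hη i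
  exact ⟨(right_ne_zero_of_mul hdet).isUnit,
    (right_ne_zero_of_mul (left_ne_zero_of_mul hdet)).isUnit⟩

lemma exists_perm_mul_pos_of_congr {d η : n → ℝ} {W : Matrix n n ℝ} (hη : ∀ i, η i ≠ 0)
    (h : Wᵀ * diagonal d * W = diagonal η) : ∃ σ : Equiv.Perm n, ∀ i, 0 < η i * d (σ i) := by
  obtain ⟨hW, hd⟩ := isUnit_det_of_congr_eq_diagonal hη h
  rw [det_diagonal, isUnit_iff_ne_zero, Finset.prod_ne_zero_iff] at hd
  have hcard : {i | 0 < η i}.ncard = {i | 0 < d i}.ncard := by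
    rw [← QuadraticForm.sigPos_weightedSumSquares, ← QuadraticForm.sigPos_weightedSumSquares]
    exact (weightedSumSquares_equivalent_of_congr hW h).sigPos_eq
  obtain ⟨e⟩ : Nonempty ({i // 0 < η i} ≃ {i // 0 < d i}) := Finite.card_eq.mp hcard
  refine ⟨e.extendSubtype, fun i => ?_⟩
  rcases (hη i).lt_or_gt with hi | hi
  · exact mul_pos_of_neg_of_neg hi
      ((not_lt.mp <| e.extendSubtype_not_mem i hi.not_gt).lt_of_ne (hd _ (Finset.mem_univ _)))
  · exact mul_pos hi (e.extendSubtype_mem i hi)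

lemma submatrix_mul_diagonal_congr {R : Type*} [CommRing R] (P M : Matrix n n R) (σ : Equiv.Perm n)
    (c : n → R) :
    (P.submatrix id σ * diagonal c)ᵀ * M * (P.submatrix id σ * diagonal c) =
      diagonal c * (Pᵀ * M * P).submatrix σ σ * diagonal c := by
  rw [transpose_mul, diagonal_transpose, transpose_submatrix]
  have hsub : (Pᵀ * M * P).submatrix σ σ = Pᵀ.submatrix σ id * M * P.submatrix id σ := by
    rw [submatrix_mul _ _ σ id σ Function.bijective_id,
      submatrix_mul _ _ σ id id Function.bijective_id, submatrix_id_id]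
  rw [hsub]
  simp only [Matrix.mul_assoc]

theorem exists_congr_eq_diagonal_of_posDef {H M Q : Matrix n n ℝ} {η : n → ℝ} (hH : H.PosDef)
    (hM : M.IsSymm) (hη : ∀ i, η i ≠ 0) (hQ : Qᵀ * M * Q = diagonal η) :
    ∃ (C : Matrix n n ℝ) (s : n → ℝ), (∀ i, 0 < s i) ∧ Cᵀ * H * C = diagonal s ∧
      Cᵀ * M * C = diagonal η := by
  obtain ⟨P, d, hP, hd⟩ := exists_congr_eq_one_and_congr_eq_diagonal hH hM
  have hPdet : IsUnit P.det := by
    rw [← isUnit_iff_isUnit_det]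
    exact .of_mul_eq_one_right _ hP
  have hPQ : (P⁻¹ * Q)ᵀ * diagonal d * (P⁻¹ * Q) = diagonal η := by
    rw [← hd, inv_mul_congr_congr hPdet, hQ]
  obtain ⟨σ, hσ⟩ := exists_perm_mul_pos_of_congr hη hPQ
  have hratio (i : n) : 0 < η i / d (σ i) := div_pos_iff.mpr (mul_pos_iff.mp (hσ i))
  refine ⟨P.submatrix id σ * diagonal fun i => √(η i / d (σ i)), fun i => η i / d (σ i), hratio,
    ?_, ?_⟩
  · rw [submatrix_mul_diagonal_congr, hP, submatrix_one_equiv, Matrix.mul_one,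
      diagonal_mul_diagonal]
    simp only [Real.mul_self_sqrt (hratio _).le]
  · rw [submatrix_mul_diagonal_congr, hd, submatrix_diagonal_equiv, diagonal_mul_diagonal,
      diagonal_mul_diagonal]
    congr 1
    ext i
    rw [Function.comp_apply, mul_right_comm, Real.mul_self_sqrt (hratio i).le,
      div_mul_cancel₀ _ (right_ne_zero_of_mul (hσ i).ne')]

end SimultaneousDiagonalization

section Cofactors

lemma mulVec_cross_mulVec {R : Type*} [CommRing R] (A : Matrix (Fin 3) (Fin 3) R)
    (u v : Fin 3 → R) : (A *ᵥ u) ⨯₃ (A *ᵥ v) = A.adjugateᵀ *ᵥ (u ⨯₃ v) := by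
  ext i
  fin_cases i <;>
    simp [cross_apply, adjugate_fin_three, mulVec, dotProduct, Fin.sum_univ_three] <;> ring

lemma transpose_mul_mul_self_eq_det_sq_smul_inv {n K : Type*} [Fintype n] [DecidableEq n] [Field K]
    {A N : Matrix n n K} (hA : IsUnit A.det) (hN : IsUnit N.det) :
    Aᵀ * N * A = A.det ^ 2 • (A.adjugate * N⁻¹ * A.adjugateᵀ)⁻¹ := by
  have hdet : A.det ≠ 0 := hA.ne_zero
  have hinv : A.adjugate⁻¹ = A.det⁻¹ • A := by
    refine inv_eq_left_inv ?_
    rw [smul_mul, mul_adjugate, smul_smul, inv_mul_cancel₀ hdet, one_smul]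
  rw [Matrix.mul_inv_rev, Matrix.mul_inv_rev, nonsing_inv_nonsing_inv _ hN,
    ← transpose_nonsing_inv, hinv, transpose_smul, smul_mul, Matrix.mul_smul, Matrix.mul_smul,
    smul_smul, smul_smul, Matrix.mul_assoc]
  field_simp
  rw [one_smul]

lemma exists_adjugate_transpose_eq {C : Matrix (Fin 3) (Fin 3) ℝ} (hC : 0 < C.det) :
    ∃ A : Matrix (Fin 3) (Fin 3) ℝ, A.adjugateᵀ = C := by
  refine ⟨(√C.det)⁻¹ • C.adjugateᵀ, ?_⟩
  rw [adjugate_smul, adjugate_transpose, adjugate_adjugate _ (by simp)]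
  simp [smul_smul, hC.ne', hC.le]

lemma exists_adjugate_transpose_eq_or_eq_neg {C : Matrix (Fin 3) (Fin 3) ℝ} (hC : IsUnit C.det) :
    ∃ A : Matrix (Fin 3) (Fin 3) ℝ, IsUnit A.det ∧ (A.adjugateᵀ = C ∨ A.adjugateᵀ = -C) := by
  have hneg : (-C).det = -C.det := by simp [det_neg, pow_succ]
  obtain ⟨A, hA⟩ : ∃ A : Matrix (Fin 3) (Fin 3) ℝ, A.adjugateᵀ = C ∨ A.adjugateᵀ = -C := by
    rcases hC.ne_zero.lt_or_gt with h | h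
    · exact (exists_adjugate_transpose_eq (by linarith)).imp fun _ => Or.inr
    · exact (exists_adjugate_transpose_eq h).imp fun _ => Or.inl
  refine ⟨A, ?_, hA⟩
  have hadj : IsUnit A.adjugateᵀ.det := by
    rcases hA with h | h
    · rwa [h]
    · rw [h, hneg]
      exact hC.neg
  rw [det_transpose, det_adjugate, Fintype.card_fin] at hadj
  exact (isUnit_pow_iff two_ne_zero).mp hadj

theorem exists_congr_and_adjugate_congr_eq_diagonal {N D Q : Matrix (Fin 3) (Fin 3) ℝ}
    {η : Fin 3 → ℝ} (hN : N.PosDef) (hD : D.IsSymm) (hη : ∀ i, η i ≠ 0)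
    (hQ : Qᵀ * D * Q = diagonal η) :
    ∃ (A : Matrix (Fin 3) (Fin 3) ℝ) (δ : Fin 3 → ℝ), IsUnit A.det ∧ (∀ i, δ i ≠ 0) ∧
      Aᵀ * N * A = diagonal (fun i => δ i ^ 2) ∧ A.adjugate * D * A.adjugateᵀ = diagonal η := by
  obtain ⟨C, s, hs, hCN, hCD⟩ := exists_congr_eq_diagonal_of_posDef hN.inv hD hη hQ
  have hC : IsUnit C.det := (isUnit_det_of_congr_eq_diagonal hη hCD).1
  obtain ⟨A, hA, hAC⟩ := exists_adjugate_transpose_eq_or_eq_neg hC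
  have hcongr (M : Matrix (Fin 3) (Fin 3) ℝ) : A.adjugate * M * A.adjugateᵀ = Cᵀ * M * C := by
    rw [← transpose_transpose A.adjugate]
    rcases hAC with h | h <;> simp [h]
  have hsqrt (i : Fin 3) : √(s i) ≠ 0 := (Real.sqrt_pos.mpr (hs i)).ne'
  have hsinv : (diagonal s)⁻¹ = diagonal fun i => (s i)⁻¹ := inv_eq_left_inv <| by
    simp [diagonal_mul_diagonal, (hs _).ne']
  refine ⟨A, fun i => A.det / √(s i), hA, fun i => div_ne_zero hA.ne_zero (hsqrt i), ?_, ?_⟩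
  · rw [transpose_mul_mul_self_eq_det_sq_smul_inv hA ((isUnit_iff_isUnit_det N).mp hN.isUnit),
      hcongr, hCN, hsinv, ← diagonal_smul]
    congr 1
    ext i
    rw [Pi.smul_apply, smul_eq_mul, div_pow, Real.sq_sqrt (hs i).le, div_eq_mul_inv]
  · rw [hcongr, hCD]

end Cofactors

section Blocks

lemma fromBlocks_congr_schur_complement {m n R : Type*} [Fintype m] [Fintype n] [DecidableEq n]
    [CommRing R] (S P : Matrix m m R) (B : Matrix m n R) {D : Matrix n n R} (Z : Matrix n n R)
    (hD : D.IsSymm) (hdet : IsUnit D.det) :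
    (fromBlocks P 0 (-(D⁻¹ * Bᵀ) * P) Z)ᵀ * fromBlocks S B Bᵀ D *
        fromBlocks P 0 (-(D⁻¹ * Bᵀ) * P) Z =
      fromBlocks (Pᵀ * (S - B * D⁻¹ * Bᵀ) * P) 0 0 (Zᵀ * D * Z) := by
  have hinv : D⁻¹ᵀ = D⁻¹ := by rw [transpose_nonsing_inv, hD.eq]
  rw [fromBlocks_transpose, fromBlocks_multiply, fromBlocks_multiply]
  simp [Matrix.mul_assoc, Matrix.add_mul, Matrix.mul_add, hinv,
    mul_nonsing_inv_cancel_left, hdet, sub_eq_add_neg]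

variable {k l : ℕ}

lemma reindex_fromBlocks_submatrix {R : Type*} (G : Matrix (Fin (k + l)) (Fin (k + l)) R) :
    reindex finSumFinEquiv finSumFinEquiv
      (fromBlocks (G.submatrix (Fin.castAdd l) (Fin.castAdd l))
        (G.submatrix (Fin.castAdd l) (Fin.natAdd k)) (G.submatrix (Fin.natAdd k) (Fin.castAdd l))
        (G.submatrix (Fin.natAdd k) (Fin.natAdd k))) = G := by
  rw [← Equiv.eq_symm_apply]
  ext (i | i) (j | j) <;> rfl

variable {R : Type*} [Semiring R]

lemma append_dotProduct_append (u u' : Fin k → R) (v v' : Fin l → R) :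
    Fin.append u v ⬝ᵥ Fin.append u' v' = u ⬝ᵥ u' + v ⬝ᵥ v' := by
  simp [dotProduct, Fin.sum_univ_add]

lemma reindex_fromBlocks_mulVec_append (A : Matrix (Fin k) (Fin k) R)
    (B : Matrix (Fin k) (Fin l) R) (C : Matrix (Fin l) (Fin k) R) (D : Matrix (Fin l) (Fin l) R)
    (u : Fin k → R) (v : Fin l → R) :
    reindex finSumFinEquiv finSumFinEquiv (fromBlocks A B C D) *ᵥ Fin.append u v =
      Fin.append (A *ᵥ u + B *ᵥ v) (C *ᵥ u + D *ᵥ v) := by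
  have happend : Fin.append u v ∘ finSumFinEquiv = Sum.elim u v := by
    ext i
    cases i <;> simp
  rw [reindex_apply, submatrix_mulVec_equiv, Equiv.symm_symm, happend, fromBlocks_mulVec]
  ext i
  refine Fin.addCases (fun i => ?_) (fun i => ?_) i <;> simp

lemma diagonal_append (a : Fin k → R) (b : Fin l → R) :
    diagonal (Fin.append a b) =
      reindex finSumFinEquiv finSumFinEquiv (fromBlocks (diagonal a) 0 0 (diagonal b)) := by
  rw [fromBlocks_diagonal, reindex_apply, submatrix_diagonal_equiv]
  congr 1
  ext i
  refine Fin.addCases (fun i => ?_) (fun i => ?_) i <;> simp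

end Blocks

section BilinearForms

variable {n : Type*} [Fintype n] [DecidableEq n]

lemma apply_eq_dotProduct_toMatrix₂'_mulVec {R : Type*} [CommRing R]
    (g : (n → R) →ₗ[R] (n → R) →ₗ[R] R) (x y : n → R) :
    g x y = x ⬝ᵥ LinearMap.toMatrix₂' R g *ᵥ y := by
  rw [← Matrix.toLinearMap₂'_apply', Matrix.toLinearMap₂'_toMatrix']

lemma of_apply_mulVec_single_eq {R : Type*} [CommRing R] (g : (n → R) →ₗ[R] (n → R) →ₗ[R] R)
    (F : Matrix n n R) :
    (Matrix.of fun i j => g (F *ᵥ Pi.single i 1) (F *ᵥ Pi.single j 1)) =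
      Fᵀ * LinearMap.toMatrix₂' R g * F := by
  ext i j
  rw [LinearMap.mul_toMatrix₂'_mul, LinearMap.toMatrix₂'_apply]
  simp

end BilinearForms

section Automorphisms

lemma exists_eq_append (x : Fin 6 → ℝ) : ∃ u v : Fin 3 → ℝ, x = Fin.append u v :=
  ⟨_, _, (Fin.append_castAdd_natAdd (m := 3) (n := 3)).symm⟩

lemma exists_eq_append_zero_of_mem_gder {z : Fin 6 → ℝ} (hz : z ∈ gder) :
    ∃ w : Fin 3 → ℝ, z = Fin.append (0 : Fin 3 → ℝ) w := by
  obtain ⟨a, b, c, rfl⟩ := Submodule.mem_span_triple.mp hz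
  refine ⟨![a, b, c], ?_⟩
  ext i
  fin_cases i <;> simp [Fin.append, Fin.addCases]

lemma bra_append (u v w z : Fin 3 → ℝ) :
    bra (Fin.append u w) (Fin.append v z) = Fin.append (0 : Fin 3 → ℝ) (u ⨯₃ v) := by
  ext i
  fin_cases i <;> simp [bra, cross_apply, Fin.append, Fin.addCases]

/-- The endomorphism of `T*𝔥₃` inducing `A` on `T*𝔥₃ / 𝔤′` and the cofactor matrix of `A` on `𝔤′`,
with off-diagonal block `X`. Every automorphism is of this form, with `A` invertible. -/
def autMatrix (A X : Matrix (Fin 3) (Fin 3) ℝ) : Matrix (Fin 6) (Fin 6) ℝ :=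
  reindex finSumFinEquiv finSumFinEquiv (fromBlocks A 0 X A.adjugateᵀ)

lemma autMatrix_mulVec_append (A X : Matrix (Fin 3) (Fin 3) ℝ) (u v : Fin 3 → ℝ) :
    autMatrix A X *ᵥ Fin.append u v = Fin.append (A *ᵥ u) (X *ᵥ u + A.adjugateᵀ *ᵥ v) := by
  have hblocks := reindex_fromBlocks_mulVec_append A 0 X A.adjugateᵀ u v
  rwa [zero_mulVec, add_zero] at hblocks

lemma det_autMatrix (A X : Matrix (Fin 3) (Fin 3) ℝ) : (autMatrix A X).det = A.det ^ 3 := by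
  rw [autMatrix, det_reindex_self, det_fromBlocks_zero₁₂, det_transpose, det_adjugate,
    Fintype.card_fin, ← pow_succ']

lemma isAuto_autMatrix {A : Matrix (Fin 3) (Fin 3) ℝ} (hA : IsUnit A.det)
    (X : Matrix (Fin 3) (Fin 3) ℝ) : IsAuto (autMatrix A X) := by
  have hF : IsUnit (autMatrix A X) := by
    rw [isUnit_iff_isUnit_det, det_autMatrix]
    exact hA.pow 3
  refine ⟨⟨mulVec_injective_iff_isUnit.mpr hF, mulVec_surjective_iff_isUnit.mpr hF⟩, fun x y => ?_⟩
  obtain ⟨u, z, rfl⟩ := exists_eq_append x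
  obtain ⟨v, w, rfl⟩ := exists_eq_append y
  simp only [bra_append, autMatrix_mulVec_append, mulVec_cross_mulVec, mulVec_zero, zero_add]

variable {G : Matrix (Fin 6) (Fin 6) ℝ}

theorem exists_autMatrix_congr_eq_reindex_fromBlocks {D : Matrix (Fin 3) (Fin 3) ℝ} (hG : G.IsSymm)
    (hGD : ∀ i j : Fin 3, G (i.addNat 3) (j.addNat 3) = D i j) (hD : IsUnit D.det) :
    ∃ X N : Matrix (Fin 3) (Fin 3) ℝ, N.IsSymm ∧ ∀ A,
      (autMatrix A (X * A))ᵀ * G * autMatrix A (X * A) =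
        reindex finSumFinEquiv finSumFinEquiv
          (fromBlocks (Aᵀ * N * A) 0 0 (A.adjugate * D * A.adjugateᵀ)) := by
  let S : Matrix (Fin 3) (Fin 3) ℝ := G.submatrix (Fin.castAdd 3) (Fin.castAdd 3)
  let B : Matrix (Fin 3) (Fin 3) ℝ := G.submatrix (Fin.castAdd 3) (Fin.natAdd 3)
  have hBlocks : G = reindex finSumFinEquiv finSumFinEquiv (fromBlocks S B Bᵀ D) := by
    have hD₂₂ : D = G.submatrix (Fin.natAdd 3) (Fin.natAdd 3) := by
      ext i j
      rw [← hGD, submatrix_apply, Fin.natAdd_eq_addNat, Fin.natAdd_eq_addNat]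
    rw [transpose_submatrix, hG.eq, hD₂₂]
    exact (reindex_fromBlocks_submatrix (k := 3) (l := 3) G).symm
  have hDsymm : D.IsSymm := .ext fun i j => by rw [← hGD, ← hGD, hG.apply]
  refine ⟨-(D⁻¹ * Bᵀ), S - B * D⁻¹ * Bᵀ, ?_, fun A => ?_⟩
  · refine (hG.submatrix _).sub ?_
    simp only [IsSymm, transpose_mul, transpose_transpose, transpose_nonsing_inv, hDsymm.eq,
      Matrix.mul_assoc]
  · conv_lhs => rw [autMatrix, hBlocks, transpose_reindex]
    simp only [reindex_apply, submatrix_mul_equiv]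
    rw [fromBlocks_congr_schur_complement S A B _ hDsymm hD, transpose_transpose]

lemma exists_orthogonal_gder_of_congr {X N D : Matrix (Fin 3) (Fin 3) ℝ}
    (h : (autMatrix 1 X)ᵀ * G * autMatrix 1 X =
      reindex finSumFinEquiv finSumFinEquiv (fromBlocks N 0 0 D)) {u : Fin 3 → ℝ} (hu : u ≠ 0) :
    ∃ x : Fin 6 → ℝ, x ≠ 0 ∧ (∀ z ∈ gder, x ⬝ᵥ G *ᵥ z = 0) ∧ x ⬝ᵥ G *ᵥ x = u ⬝ᵥ N *ᵥ u := by
  have hform (x y : Fin 6 → ℝ) : (autMatrix 1 X *ᵥ x) ⬝ᵥ G *ᵥ (autMatrix 1 X *ᵥ y) =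
      x ⬝ᵥ reindex finSumFinEquiv finSumFinEquiv (fromBlocks N 0 0 D) *ᵥ y := by
    rw [← h, ← mulVec_mulVec, ← mulVec_mulVec, dotProduct_mulVec x, vecMul_transpose]
  refine ⟨autMatrix 1 X *ᵥ Fin.append u (0 : Fin 3 → ℝ), ?_, fun z hz => ?_, ?_⟩
  · obtain ⟨i, hi⟩ := Function.ne_iff.mp hu
    rw [autMatrix_mulVec_append]
    exact Function.ne_iff.mpr ⟨Fin.castAdd 3 i, by simpa using hi⟩
  · obtain ⟨w, rfl⟩ := exists_eq_append_zero_of_mem_gder hz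
    have hw : Fin.append (0 : Fin 3 → ℝ) w = autMatrix 1 X *ᵥ Fin.append 0 w := by
      simp [autMatrix_mulVec_append]
    rw [hw, hform, reindex_fromBlocks_mulVec_append, append_dotProduct_append]
    simp
  · rw [hform, reindex_fromBlocks_mulVec_append, append_dotProduct_append]
    simp

lemma smul_posDef_of_pos_on_orthogonal_gder {X N D : Matrix (Fin 3) (Fin 3) ℝ} {ε : ℝ}
    (hN : N.IsSymm)
    (h : (autMatrix 1 X)ᵀ * G * autMatrix 1 X =
      reindex finSumFinEquiv finSumFinEquiv (fromBlocks N 0 0 D))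
    (hpos : ∀ x, (∀ z ∈ gder, x ⬝ᵥ G *ᵥ z = 0) → x ≠ 0 → 0 < ε * (x ⬝ᵥ G *ᵥ x)) :
    (ε • N).PosDef := by
  refine .of_dotProduct_mulVec_pos
    ((conjTranspose_eq_transpose_of_trivial _).trans (hN.smul ε)) fun u hu => ?_
  obtain ⟨x, hx, hxz, hxu⟩ := exists_orthogonal_gder_of_congr h hu
  rw [star_trivial, smul_mulVec, dotProduct_smul, smul_eq_mul, ← hxu]
  exact hpos x hxz hx

theorem exists_isAuto_congr_eq_diagonal {D Q : Matrix (Fin 3) (Fin 3) ℝ} {η : Fin 3 → ℝ} {ε : ℝ}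
    (hG : G.IsSymm) (hGD : ∀ i j : Fin 3, G (i.addNat 3) (j.addNat 3) = D i j)
    (hη : ∀ i, η i ≠ 0) (hQ : Qᵀ * D * Q = diagonal η) (hε : ε * ε = 1)
    (hpos : ∀ x, (∀ z ∈ gder, x ⬝ᵥ G *ᵥ z = 0) → x ≠ 0 → 0 < ε * (x ⬝ᵥ G *ᵥ x)) :
    ∃ (F : Matrix (Fin 6) (Fin 6) ℝ) (δ : Fin 3 → ℝ), IsAuto F ∧ (∀ i, δ i ≠ 0) ∧
      Fᵀ * G * F = diagonal (Fin.append (fun i => ε * δ i ^ 2) η) := by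
  have hD : D.IsSymm := .ext fun i j => by rw [← hGD, ← hGD, hG.apply]
  obtain ⟨X, N, hN, hX⟩ := exists_autMatrix_congr_eq_reindex_fromBlocks hG hGD
    (isUnit_det_of_congr_eq_diagonal hη hQ).2
  have hX₁ := hX 1
  simp only [transpose_one, Matrix.one_mul, Matrix.mul_one, adjugate_one] at hX₁
  obtain ⟨A, δ, hA, hδ, hAN, hAD⟩ := exists_congr_and_adjugate_congr_eq_diagonal
    (smul_posDef_of_pos_on_orthogonal_gder hN hX₁ hpos) hD hη hQ
  have hANA : Aᵀ * N * A = diagonal fun i => ε * δ i ^ 2 := by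
    calc Aᵀ * N * A = ε • (Aᵀ * (ε • N) * A) := by
          rw [Matrix.mul_smul, smul_mul, smul_smul, hε, one_smul]
      _ = diagonal fun i => ε * δ i ^ 2 := by
          rw [hAN, ← diagonal_smul]
          rfl
  exact ⟨autMatrix A (X * A), δ, isAuto_autMatrix hA _, hδ,
    by rw [hX, hANA, hAD, diagonal_append]⟩

end Automorphisms

theorem stmt_6_general {η : Fin 3 → ℝ} (hη : ∀ i, η i ≠ 0)
    (g : (Fin 6 → ℝ) →ₗ[ℝ] (Fin 6 → ℝ) →ₗ[ℝ] ℝ)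
    (hsym : ∀ x y, g x y = g y x)
    (hsig : ∃ Q : Matrix (Fin 3) (Fin 3) ℝ,
      Qᵀ * (Matrix.of fun i j : Fin 3 =>
        g (Pi.single (i.addNat 3) 1) (Pi.single (j.addNat 3) 1)) * Q = diagonal η)
    (hperp : (∀ x : Fin 6 → ℝ, (∀ z ∈ gder, g x z = 0) → x ≠ 0 → 0 < g x x) ∨
             (∀ x : Fin 6 → ℝ, (∀ z ∈ gder, g x z = 0) → x ≠ 0 → g x x < 0)) :
    ∃ F : Matrix (Fin 6) (Fin 6) ℝ, IsAuto F ∧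
      ∃ (ε : ℝ) (δ : Fin 3 → ℝ), (ε = 1 ∨ ε = -1) ∧ (∀ i, δ i ≠ 0) ∧
        (Matrix.of fun i j : Fin 6 => g (F *ᵥ Pi.single i 1) (F *ᵥ Pi.single j 1)) =
          diagonal (Fin.append (fun i => ε * δ i ^ 2) η) := by
  obtain ⟨Q, hQ⟩ := hsig
  set G := LinearMap.toMatrix₂' ℝ g
  have hG : G.IsSymm := .ext fun i j => hsym _ _
  have hform (x y : Fin 6 → ℝ) : g x y = x ⬝ᵥ G *ᵥ y := apply_eq_dotProduct_toMatrix₂'_mulVec g x y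
  obtain ⟨ε, hε, hpos⟩ : ∃ ε : ℝ, (ε = 1 ∨ ε = -1) ∧
      ∀ x, (∀ z ∈ gder, x ⬝ᵥ G *ᵥ z = 0) → x ≠ 0 → 0 < ε * (x ⬝ᵥ G *ᵥ x) := by
    simp only [hform] at hperp
    rcases hperp with h | h
    · exact ⟨1, .inl rfl, by simpa using h⟩
    · exact ⟨-1, .inr rfl, by simpa using h⟩
  obtain ⟨F, δ, hF, hδ, hdiag⟩ := exists_isAuto_congr_eq_diagonal hG (fun _ _ => rfl) hη hQ
    (mul_self_eq_one_iff.mpr hε) hpos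
  exact ⟨F, hF, ε, δ, hε, hδ, (of_apply_mulVec_single_eq g F).trans hdiag⟩

/-- A nondegenerate symmetric bilinear form on `T*𝔥₃` whose restriction to `𝔤′` has
signature `(2,1)` and whose restriction to `𝔤′^⊥` is definite can be brought, by an
automorphism, to the diagonal form `diag(εδ₁², εδ₂², εδ₃², 1, 1, −1)`. -/
theorem stmt_6 (g : (Fin 6 → ℝ) →ₗ[ℝ] (Fin 6 → ℝ) →ₗ[ℝ] ℝ)
    (hsym : ∀ x y, g x y = g y x)
    (hnd : ∀ x, (∀ y, g x y = 0) → x = 0)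
    (hsig : ∃ Q : Matrix (Fin 3) (Fin 3) ℝ, IsUnit Q.det ∧
      Qᵀ * (Matrix.of fun i j : Fin 3 =>
        g (Pi.single (i.addNat 3) 1) (Pi.single (j.addNat 3) 1)) * Q = E21)
    (hperp : (∀ x : Fin 6 → ℝ, (∀ z ∈ gder, g x z = 0) → x ≠ 0 → 0 < g x x) ∨
             (∀ x : Fin 6 → ℝ, (∀ z ∈ gder, g x z = 0) → x ≠ 0 → g x x < 0)) :
    ∃ F : Matrix (Fin 6) (Fin 6) ℝ, IsAuto F ∧
      ∃ ε d1 d2 d3 : ℝ, (ε = 1 ∨ ε = -1) ∧ d1 ≠ 0 ∧ d2 ≠ 0 ∧ d3 ≠ 0 ∧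
        (Matrix.of fun i j : Fin 6 =>
            g (F.mulVec (Pi.single i 1)) (F.mulVec (Pi.single j 1))) =
          Matrix.diagonal ![ε * d1 ^ 2, ε * d2 ^ 2, ε * d3 ^ 2, 1, 1, -1] := by
  obtain ⟨Q, -, hQ⟩ := hsig
  have hη (i : Fin 3) : (![1, 1, -1] : Fin 3 → ℝ) i ≠ 0 := by fin_cases i <;> norm_num
  obtain ⟨F, hF, ε, δ, hε, hδ, hdiag⟩ := stmt_6_general hη g hsym ⟨Q, hQ⟩ hperp
  refine ⟨F, hF, ε, δ 0, δ 1, δ 2, hε, hδ 0, hδ 1, hδ 2, hdiag.trans (congrArg diagonal ?_)⟩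
  ext i
  fin_cases i <;> rfl
end
end

section
/- Let 𝔤 be a finite-dimensional real Lie algebra with a nondegenerate symmetric bilinear form ⟨·,·⟩ and Levi-Civita connection ∇. A vector x ∈ 𝔤 is parallel (i.e. ∇_y x = 0 for all y ∈ 𝔤) if and only if ⟨x, [u,v]⟩ = 0 for all u,v ∈ 𝔤 and ⟨[x,y], z⟩ = −⟨y, [x,z]⟩ for all y,z ∈ 𝔤. -/
/-!
For fixed `x`, the Koszul formula reads `2 ⟨∇_y x, z⟩ = S(y, z) + A(y, z)` with
`S(y, z) = -(⟨[x, y], z⟩ + ⟨y, [x, z]⟩)` symmetric (the Lie derivative of the metric along `x`)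
and `A(y, z) = -⟨x, [y, z]⟩` antisymmetric (the exterior derivative of `⟨x, ·⟩`). The sum vanishes
iff both parts do, so `x` is parallel iff it is Killing and its dual one-form is closed.
-/

section SymmetricAntisymmetric

variable {α R : Type*} [NonAssocRing R] {S A : α → α → R}

theorem forall_add_eq_zero_iff_of_symm_of_antisymm (h2 : IsLeftRegular (2 : R))
    (hS : ∀ a b, S a b = S b a) (hA : ∀ a b, A a b = -A b a) :
    (∀ a b, S a b + A a b = 0) ↔ (∀ a b, S a b = 0) ∧ ∀ a b, A a b = 0 := by
  refine ⟨fun h ↦ ?_, fun ⟨hS0, hA0⟩ a b ↦ by rw [hS0, hA0, add_zero]⟩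
  have hS0 (a b : α) : S a b = 0 := by
    refine h2.mul_left_eq_zero_iff.mp ?_
    calc
      2 * S a b = (S a b + A a b) + (S b a + A b a) := by rw [hS b a, hA b a, two_mul]; abel
      _ = 0 := by rw [h a b, h b a, add_zero]
  exact ⟨hS0, fun a b ↦ by simpa only [hS0, zero_add] using h a b⟩

end SymmetricAntisymmetric

section LeviCivita

variable {R L : Type*} [CommRing R] [LieRing L] [LieAlgebra R L]
  {g : LinearMap.BilinForm R L} {D : L → L → L}

/-- The product `D` on a Lie algebra is a Levi-Civita connection of the form `g`, with `D x y`
standing for `∇_x y`. The Koszul formula is taken as the definition, and `D` is encoded as a plain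
function of two arguments. -/
def IsLeviCivita (g : LinearMap.BilinForm R L) (D : L → L → L) : Prop :=
  ∀ x y z, 2 * g (D x y) z = g ⁅x, y⁆ z - g ⁅y, z⁆ x + g ⁅z, x⁆ y

theorem IsLeviCivita.two_mul_apply_eq_add (hD : IsLeviCivita g D) (hsymm : g.IsSymm) (x y z : L) :
    2 * g (D y x) z = -(g ⁅x, y⁆ z + g y ⁅x, z⁆) + -g x ⁅y, z⁆ := by
  rw [hD y x z, hsymm.eq ⁅x, z⁆ y, hsymm.eq ⁅z, y⁆ x, ← lie_skew y x, ← lie_skew z y]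
  simp only [map_neg, LinearMap.neg_apply]
  ring

theorem IsLeviCivita.forall_two_mul_apply_eq_zero_iff (hD : IsLeviCivita g D)
    (hsymm : g.IsSymm) (h2 : IsLeftRegular (2 : R)) (x : L) :
    (∀ y z, 2 * g (D y x) z = 0) ↔
      (∀ u v : L, g x ⁅u, v⁆ = 0) ∧ ∀ y z : L, g ⁅x, y⁆ z = -g y ⁅x, z⁆ := by
  have hS (y z : L) : -(g ⁅x, y⁆ z + g y ⁅x, z⁆) = -(g ⁅x, z⁆ y + g z ⁅x, y⁆) := by
    rw [hsymm.eq ⁅x, y⁆ z, hsymm.eq y ⁅x, z⁆, add_comm]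
  have hA (y z : L) : -g x ⁅y, z⁆ = - -g x ⁅z, y⁆ := by
    rw [← lie_skew y z, map_neg]
  simp only [hD.two_mul_apply_eq_add hsymm]
  rw [forall_add_eq_zero_iff_of_symm_of_antisymm h2 hS hA, and_comm]
  simp only [neg_eq_zero, add_eq_zero_iff_eq_neg]

theorem stmt_9_general (h2 : IsLeftRegular (2 : R)) (hsymm : g.IsSymm) (hsep : g.SeparatingLeft)
    (hD : IsLeviCivita g D) (x : L) :
    (∀ y, D y x = 0) ↔
      (∀ u v : L, g x ⁅u, v⁆ = 0) ∧ ∀ y z : L, g ⁅x, y⁆ z = -g y ⁅x, z⁆ := by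
  rw [← hD.forall_two_mul_apply_eq_zero_iff hsymm h2 x]
  refine forall_congr' fun y ↦ ⟨fun h z ↦ ?_, fun h ↦ hsep _ fun z ↦ ?_⟩
  · rw [h, map_zero, LinearMap.zero_apply, mul_zero]
  · exact h2.mul_left_eq_zero_iff.mp (h z)

end LeviCivita

/-- In a finite-dimensional real metric Lie algebra, a vector `x` is parallel for the
Levi-Civita connection (given by the Koszul formula) iff `x` is orthogonal to the derived
algebra and `ad_x` is skew-symmetric for the form (`ad*_x = −ad_x`). -/
theorem stmt_9 (L : Type*) [LieRing L] [LieAlgebra ℝ L] [Module.Finite ℝ L]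
    (g : L →ₗ[ℝ] L →ₗ[ℝ] ℝ)
    (hsym : ∀ x y, g x y = g y x)
    (hnd : ∀ x, (∀ y, g x y = 0) → x = 0)
    (D : L → L → L)
    (hkoszul : ∀ x y z, 2 * g (D x y) z = g ⁅x, y⁆ z - g ⁅y, z⁆ x + g ⁅z, x⁆ y)
    (x : L) :
    (∀ y, D y x = 0) ↔
      ((∀ u v : L, g x ⁅u, v⁆ = 0) ∧ ∀ y z : L, g ⁅x, y⁆ z = -g y ⁅x, z⁆) :=
  stmt_9_general (IsRegular.of_ne_zero two_ne_zero).left ⟨hsym⟩ hnd hkoszul x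
end
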